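/- arXiv:1305.7212 — 6 statements merged into one kernel-verified Lean document; each statement's English description precedes it below -/
import Mathlib

section
/- A permutation π of the positive integers belongs to the Lévy group 𝒢 if and only if for every subset A of the positive integers, lim_{n→∞} (A(n) − (πA)(n))/n = 0, where πA denotes the image of A under π. -/
open Filter Topology

/-- The counting function `A(n) = |A ∩ [1, n]|`, as a real number. -/
noncomputable def count (A : Set ℕ) (n : ℕ) : ℝ :=
  ((A ∩ Set.Icc 1 n).ncard : ℝ)

/-- `A ⊆ ℕ` has asymptotic density `a`, i.e. `A(n)/n → a`. -/
def HasDensity (A : Set ℕ) (a : ℝ) : Prop :=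
  Filter.Tendsto (fun n : ℕ => count A n / n) Filter.atTop (nhds a)

/-- Membership of a permutation `π` of `ℕ` in the Lévy group `𝒢`:
`|{k : k ≤ n < π(k)}| / n → 0`. -/
def InLevyGroup (π : Equiv.Perm ℕ) : Prop :=
  Filter.Tendsto
    (fun n : ℕ => (({k : ℕ | k ≤ n ∧ n < π k}.ncard : ℝ) / n))
    Filter.atTop (nhds 0)

/-- A finitely additive probability measure defined on all subsets of `ℕ`,
with values in `[0, 1]`. -/
def IsFAMeasure (μ : Set ℕ → ℝ) : Prop :=
  (∀ A : Set ℕ, 0 ≤ μ A) ∧ (∀ A : Set ℕ, μ A ≤ 1) ∧ μ Set.univ = 1 ∧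
    ∀ A B : Set ℕ, Disjoint A B → μ (A ∪ B) = μ A + μ B

/-- A density measure: a finitely additive measure extending asymptotic density. -/
def IsDensityMeasure (μ : Set ℕ → ℝ) : Prop :=
  IsFAMeasure μ ∧ ∀ (A : Set ℕ) (a : ℝ), HasDensity A a → μ A = a

/-- Statistical convergence of a real sequence `x` to `L`: for every `ε > 0`
the set `{n : |x n − L| ≥ ε}` has asymptotic density zero. -/
def StatTendsto (x : ℕ → ℝ) (L : ℝ) : Prop :=
  ∀ ε : ℝ, 0 < ε → HasDensity {n : ℕ | ε ≤ |x n - L|} 0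

/-- The limit of a (bounded) real sequence along an ultrafilter on `ℕ`. -/
noncomputable def ulim (𝒰 : Ultrafilter ℕ) (x : ℕ → ℝ) : ℝ :=
  limUnder (𝒰 : Filter ℕ) x

/-- Starting the count at `0` instead of `1` changes it by at most one. -/
lemma count_le_ncard_inter_Iic (A : Set ℕ) (n : ℕ) :
    count A n ≤ ((A ∩ Set.Iic n).ncard : ℝ) ∧ ((A ∩ Set.Iic n).ncard : ℝ) ≤ count A n + 1 := by
  have hfin : (A ∩ Set.Icc 1 n).Finite := (Set.finite_Icc 1 n).inter_of_right A
  constructor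
  · unfold count
    exact_mod_cast Set.ncard_le_ncard (Set.inter_subset_inter_right A Set.Icc_subset_Iic_self)
      ((Set.finite_Iic n).inter_of_right A)
  · have hsub : A ∩ Set.Iic n ⊆ insert 0 (A ∩ Set.Icc 1 n) := by
      rintro k ⟨hkA, hkn⟩
      rcases Nat.eq_zero_or_pos k with rfl | hk
      · exact Set.mem_insert _ _
      · exact Set.mem_insert_of_mem _ ⟨hkA, hk, hkn⟩
    unfold count
    exact_mod_cast (Set.ncard_le_ncard hsub (hfin.insert 0)).trans (Set.ncard_insert_le _ _)

/-- The elements of `A` up to `n` and those of `π '' A` up to `n` differ by the elements that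
`π` carries across `n` upwards, respectively downwards. -/
lemma ncard_inter_Iic_add_ncard_crossing (π : Equiv.Perm ℕ) (A : Set ℕ) (n : ℕ) :
    (A ∩ Set.Iic n).ncard + (A ∩ {k | n < k ∧ π k ≤ n}).ncard =
      (π '' A ∩ Set.Iic n).ncard + (A ∩ {k | k ≤ n ∧ n < π k}).ncard := by
  have hpre : (π ⁻¹' Set.Iic n).Finite := (Set.finite_Iic n).preimage π.injective.injOn
  have himage : (π '' A ∩ Set.Iic n).ncard = (A ∩ π ⁻¹' Set.Iic n).ncard := by
    rw [← Set.image_inter_preimage, Set.ncard_image_of_injective _ π.injective]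
  have hup : (A ∩ {k | k ≤ n ∧ n < π k}).Finite := (Set.finite_Iic n).subset fun k hk => hk.2.1
  have hdown : (A ∩ {k | n < k ∧ π k ≤ n}).Finite := hpre.subset fun k hk => hk.2.2
  have hdisj_down : Disjoint (A ∩ Set.Iic n) (A ∩ {k | n < k ∧ π k ≤ n}) :=
    Set.disjoint_left.mpr fun k hk hk' => absurd hk.2 (not_le.mpr hk'.2.1)
  have hdisj_up : Disjoint (A ∩ π ⁻¹' Set.Iic n) (A ∩ {k | k ≤ n ∧ n < π k}) :=
    Set.disjoint_left.mpr fun k hk hk' => absurd hk.2 (not_le.mpr hk'.2.2)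
  rw [himage, ← Set.ncard_union_eq hdisj_down ((Set.finite_Iic n).inter_of_right A) hdown,
    ← Set.ncard_union_eq hdisj_up (hpre.inter_of_right A) hup]
  congr 1
  ext k
  simp only [Set.mem_union, Set.mem_inter_iff, Set.mem_Iic, Set.mem_ofPred_eq, Set.mem_preimage]
  grind

/-- A permutation carries as many elements across `n` downwards as upwards. -/
lemma ncard_down_crossing_eq_up_crossing (π : Equiv.Perm ℕ) (n : ℕ) :
    {k | n < k ∧ π k ≤ n}.ncard = {k | k ≤ n ∧ n < π k}.ncard := by
  simpa using ncard_inter_Iic_add_ncard_crossing π Set.univ n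

lemma abs_count_sub_count_image_le (π : Equiv.Perm ℕ) (A : Set ℕ) (n : ℕ) :
    |count A n - count (π '' A) n| ≤ ({k | k ≤ n ∧ n < π k}.ncard : ℝ) + 1 := by
  have hup : (A ∩ {k | k ≤ n ∧ n < π k}).ncard ≤ {k | k ≤ n ∧ n < π k}.ncard :=
    Set.ncard_le_ncard Set.inter_subset_right ((Set.finite_Iic n).subset fun k hk => hk.1)
  have hdown : (A ∩ {k | n < k ∧ π k ≤ n}).ncard ≤ {k | k ≤ n ∧ n < π k}.ncard := by
    rw [← ncard_down_crossing_eq_up_crossing]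
    exact Set.ncard_le_ncard Set.inter_subset_right
      (((Set.finite_Iic n).preimage π.injective.injOn).subset fun k hk => hk.2)
  have hcross := ncard_inter_Iic_add_ncard_crossing π A n
  have hA := count_le_ncard_inter_Iic A n
  have hπA := count_le_ncard_inter_Iic (π '' A) n
  rw [← Nat.cast_le (α := ℝ)] at hup hdown
  rw [← Nat.cast_inj (R := ℝ), Nat.cast_add, Nat.cast_add] at hcross
  have hup_nonneg : (0 : ℝ) ≤ (A ∩ {k | k ≤ n ∧ n < π k}).ncard := Nat.cast_nonneg _
  have hdown_nonneg : (0 : ℝ) ≤ (A ∩ {k | n < k ∧ π k ≤ n}).ncard := Nat.cast_nonneg _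
  rw [abs_le]
  constructor <;> linarith

/-- The set of points moved upwards by `π` detects every upward crossing. -/
lemma ncard_up_crossing_le (π : Equiv.Perm ℕ) (n : ℕ) :
    ({k | k ≤ n ∧ n < π k}.ncard : ℝ) ≤
      count {k | k < π k} n - count (π '' {k | k < π k}) n + 1 := by
  have hcross := ncard_inter_Iic_add_ncard_crossing π {k | k < π k} n
  have hup : {k | k < π k} ∩ {k | k ≤ n ∧ n < π k} = {k | k ≤ n ∧ n < π k} :=
    Set.inter_eq_right.mpr fun k hk => hk.1.trans_lt hk.2
  have hdown : {k | k < π k} ∩ {k | n < k ∧ π k ≤ n} = ∅ := by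
    ext k
    simp only [Set.mem_inter_iff, Set.mem_ofPred_eq, Set.mem_empty_iff_false, iff_false]
    omega
  rw [hup, hdown, Set.ncard_empty, add_zero] at hcross
  rw [← Nat.cast_inj (R := ℝ), Nat.cast_add] at hcross
  linarith [(count_le_ncard_inter_Iic {k | k < π k} n).2,
    (count_le_ncard_inter_Iic (π '' {k | k < π k}) n).1]

/-- A permutation `π` of the positive integers belongs to the Lévy group iff
`(A(n) − (πA)(n))/n → 0` for every `A ⊆ ℕ`. -/
theorem inLevyGroup_iff_count_diff_tendsto_zero (π : Equiv.Perm ℕ) :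
    InLevyGroup π ↔
      ∀ A : Set ℕ,
        Filter.Tendsto (fun n : ℕ => (count A n - count (π '' A) n) / n)
          Filter.atTop (nhds 0) := by
  have hinv : Tendsto (fun n : ℕ => (1 : ℝ) / n) atTop (𝓝 0) := tendsto_one_div_atTop_nhds_zero_nat
  constructor
  · intro hπ A
    refine squeeze_zero_norm (fun n => ?_) (by simpa only [add_zero] using Tendsto.add hπ hinv)
    rw [norm_div, Real.norm_natCast, ← add_div, Real.norm_eq_abs]
    gcongr
    exact abs_count_sub_count_image_le π A n
  · intro h
    refine squeeze_zero (fun n => by positivity) (fun n => ?_)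
      (by simpa only [add_zero] using (h {k | k < π k}).add hinv)
    rw [← add_div]
    gcongr
    exact ncard_up_crossing_le π n
end

section
/- A real sequence (x_n) is statistically convergent to L ∈ ℝ if and only if there exists a set A ⊆ ℕ with asymptotic density d(A) = 1 such that the subsequence (x_n)_{n∈A} converges to L, i.e., x_n → L as n → ∞ along n ∈ A. -/
open Filter Topology

lemma count_nonneg (A : Set ℕ) (n : ℕ) : 0 ≤ count A n := Nat.cast_nonneg _

lemma count_le_count_of_inter_subset {A B : Set ℕ} {n : ℕ}
    (h : A ∩ Set.Icc 1 n ⊆ B) : count A n ≤ count B n := by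
  unfold count
  exact_mod_cast Set.ncard_le_ncard (Set.subset_inter h Set.inter_subset_right)
    ((Set.finite_Icc 1 n).subset Set.inter_subset_right)

lemma count_union_Iio_le (A : Set ℕ) (N n : ℕ) :
    count (A ∪ Set.Iio N) n ≤ count A n + N := by
  have h : ((A ∪ Set.Iio N) ∩ Set.Icc 1 n).ncard ≤ (A ∩ Set.Icc 1 n).ncard + N := by
    calc ((A ∪ Set.Iio N) ∩ Set.Icc 1 n).ncard
        ≤ ((A ∩ Set.Icc 1 n) ∪ Set.Iio N).ncard := by
          refine Set.ncard_le_ncard ?_ (((Set.finite_Icc 1 n).subset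
            Set.inter_subset_right).union (Set.finite_Iio N))
          rw [Set.union_inter_distrib_right]
          exact Set.union_subset_union_right _ Set.inter_subset_left
      _ ≤ (A ∩ Set.Icc 1 n).ncard + (Set.Iio N).ncard := Set.ncard_union_le _ _
      _ = (A ∩ Set.Icc 1 n).ncard + N := by
          rw [← Finset.coe_Iio, Set.ncard_coe_finset, Nat.card_Iio]
  unfold count
  exact_mod_cast h

lemma count_add_count_compl (A : Set ℕ) (n : ℕ) : count A n + count Aᶜ n = n := by
  have h := Set.ncard_inter_add_ncard_sdiff_eq_ncard (Set.Icc 1 n) A (Set.finite_Icc 1 n)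
  rw [Set.inter_comm, Set.sdiff_eq, Set.inter_comm _ Aᶜ, ← Finset.coe_Icc,
    Set.ncard_coe_finset, Nat.card_Icc, Nat.add_sub_cancel, Finset.coe_Icc] at h
  unfold count
  exact_mod_cast h

lemma HasDensity.compl {A : Set ℕ} {a : ℝ} (h : HasDensity A a) :
    HasDensity Aᶜ (1 - a) := by
  refine (h.const_sub 1).congr' ?_
  filter_upwards [eventually_gt_atTop 0] with n hn
  have hn' : (n : ℝ) ≠ 0 := by positivity
  rw [← count_add_count_compl A n] at hn' ⊢
  field_simp
  ring

/-- A set contained in a null set up to finitely many elements is null. -/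
lemma HasDensity.zero_of_subset_union_Iio {A B : Set ℕ} {N : ℕ} (h : HasDensity B 0)
    (hAB : A ⊆ B ∪ Set.Iio N) : HasDensity A 0 := by
  have hlim : Tendsto (fun n : ℕ => count B n / n + (N : ℝ) / n) atTop (𝓝 0) := by
    simpa using Tendsto.add h (tendsto_const_div_atTop_nhds_zero_nat (N : ℝ))
  refine squeeze_zero (fun n => div_nonneg (count_nonneg A n) n.cast_nonneg) (fun n => ?_) hlim
  rw [← add_div]
  gcongr
  exact (count_le_count_of_inter_subset (Set.inter_subset_left.trans hAB)).trans
    (count_union_Iio_le B N n)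

/-- Null sets form a P-ideal: an increasing sequence of null sets has a null
pseudo-union. -/
lemma exists_hasDensity_zero_of_monotone {B : ℕ → Set ℕ} (hmono : Monotone B)
    (hB : ∀ k, HasDensity (B k) 0) :
    ∃ C : Set ℕ, HasDensity C 0 ∧ ∀ k, ∃ N, ∀ n ≥ N, n ∈ B k → n ∈ C := by
  have hev : ∀ k : ℕ, ∀ᶠ N : ℕ in atTop, ∀ n ≥ N, count (B k) n / n < 1 / ((k : ℝ) + 1) :=
    fun k => eventually_forall_ge_atTop.2
      (Tendsto.eventually_lt_const Nat.one_div_pos_of_nat (hB k))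
  obtain ⟨φ, hφ, hsmall⟩ := extraction_forall_of_eventually hev
  refine ⟨{n | ∃ k, φ k ≤ n ∧ n ∈ B k}, ?_, fun k => ⟨φ k, fun n hn hnB => ⟨k, hn, hnB⟩⟩⟩
  refine tendsto_order.2 ⟨fun b hb => Eventually.of_forall fun n =>
    hb.trans_le (div_nonneg (count_nonneg _ n) n.cast_nonneg), fun ε hε => ?_⟩
  obtain ⟨K, hK⟩ := exists_nat_one_div_lt hε
  filter_upwards [eventually_ge_atTop (φ K)] with n hn
  have hKn : K ≤ n := (hφ.id_le K).trans hn
  set k := Nat.findGreatest (fun j => φ j ≤ n) n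
  have hkn : φ k ≤ n := Nat.findGreatest_spec (P := fun j => φ j ≤ n) hKn hn
  have hKk : K ≤ k := Nat.le_findGreatest hKn hn
  calc count {n | ∃ k, φ k ≤ n ∧ n ∈ B k} n / n ≤ count (B k) n / n := by
        gcongr
        refine count_le_count_of_inter_subset ?_
        rintro m ⟨⟨j, hjm, hmB⟩, -, hmn⟩
        have hjn : φ j ≤ n := hjm.trans hmn
        exact hmono (Nat.le_findGreatest ((hφ.id_le j).trans hjn) hjn) hmB
    _ < 1 / ((k : ℝ) + 1) := hsmall k n hkn
    _ ≤ 1 / ((K : ℝ) + 1) := Nat.one_div_le_one_div hKk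
    _ < ε := hK

/-- A real sequence converges statistically to `L` iff it converges to `L`
along a set of asymptotic density one. -/
theorem statTendsto_iff_tendsto_along_density_one_set (x : ℕ → ℝ) (L : ℝ) :
    StatTendsto x L ↔
      ∃ A : Set ℕ, HasDensity A 1 ∧
        Filter.Tendsto x (Filter.atTop ⊓ Filter.principal A) (nhds L) := by
  constructor
  · intro h
    obtain ⟨C, hC, hBC⟩ := exists_hasDensity_zero_of_monotone
      (B := fun k : ℕ => {n : ℕ | 1 / ((k : ℝ) + 1) ≤ |x n - L|})
      (fun i j hij => Set.ofPred_subset_ofPred.2 fun n hn =>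
        (Nat.one_div_le_one_div hij).trans hn)
      (fun k => h _ Nat.one_div_pos_of_nat)
    refine ⟨Cᶜ, by simpa using hC.compl, Metric.tendsto_nhds.2 fun ε hε => ?_⟩
    obtain ⟨k, hk⟩ := exists_nat_one_div_lt hε
    obtain ⟨N, hN⟩ := hBC k
    rw [eventually_inf_principal]
    filter_upwards [eventually_ge_atTop N] with n hn hnC
    rw [Real.dist_eq]
    exact (not_le.1 fun hle => hnC (hN n hn hle)).trans hk
  · rintro ⟨A, hA, hx⟩ ε hε
    have hev := eventually_inf_principal.1 (Metric.tendsto_nhds.1 hx ε hε)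
    obtain ⟨N, hN⟩ := eventually_atTop.1 hev
    have hAc : HasDensity Aᶜ 0 := by simpa using hA.compl
    refine hAc.zero_of_subset_union_Iio (N := N) fun n hn => ?_
    by_contra hnot
    simp only [Set.mem_union, Set.mem_compl_iff, Set.mem_Iio, not_or, not_not, not_lt] at hnot
    exact absurd (hN n hnot.2 hnot.1) (not_lt.2 hn)
end

section
/- A permutation π of the positive integers belongs to the Lévy group 𝒢 if and only if the sequence (π(n)/n) converges statistically to 1, i.e., for every ε > 0 the set {n : |π(n)/n − 1| ≥ ε} has asymptotic density zero. -/
open Filter Topology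

/-- The elements `k` that `π` carries across the cut between `m` and `m + 1`, in either direction. -/
def crossing (π : Equiv.Perm ℕ) (m : ℕ) : Set ℕ :=
  {k | k ≤ m ∧ m < π k} ∪ {k | π k ≤ m ∧ m < k}

/-- As many elements cross a cut upwards as downwards. -/
lemma ncard_down_eq_ncard_up (π : Equiv.Perm ℕ) (m : ℕ) :
    {k : ℕ | π k ≤ m ∧ m < k}.ncard = {k : ℕ | k ≤ m ∧ m < π k}.ncard := by
  have hfin : (π ⁻¹' Set.Iic m).Finite := (Set.finite_Iic m).preimage π.injective.injOn
  have hcard : (π ⁻¹' Set.Iic m).ncard = (Set.Iic m).ncard :=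
    Set.ncard_preimage_of_injective_subset_range π.injective (by simp)
  have h := (Set.ncard_eq_ncard_iff_ncard_sdiff_eq_ncard_sdiff hfin (Set.finite_Iic m)).1 hcard
  convert h using 2 <;> ext k <;> simp [and_comm]

lemma ncard_crossing_le (π : Equiv.Perm ℕ) (m : ℕ) :
    (crossing π m).ncard ≤ 2 * {k : ℕ | k ≤ m ∧ m < π k}.ncard := by
  have h := Set.ncard_union_le {k : ℕ | k ≤ m ∧ m < π k} {k : ℕ | π k ≤ m ∧ m < k}
  rw [ncard_down_eq_ncard_up] at h
  unfold crossing
  lia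

lemma finite_crossing (π : Equiv.Perm ℕ) (m : ℕ) : (crossing π m).Finite :=
  ((Set.finite_Iic m).subset fun _ hk => hk.1).union
    (((Set.finite_Iic m).preimage π.injective.injOn).subset fun _ hk => hk.1)

/-- In the Lévy group, the number of upward crossings is bounded by `η m + C`. -/
lemma InLevyGroup.exists_ncard_le {π : Equiv.Perm ℕ} (h : InLevyGroup π) {η : ℝ} (hη : 0 < η) :
    ∃ C : ℝ, 0 ≤ C ∧ ∀ m : ℕ, ({k : ℕ | k ≤ m ∧ m < π k}.ncard : ℝ) ≤ η * m + C := by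
  obtain ⟨m₀, hm₀⟩ := eventually_atTop.1 (h.eventually (gt_mem_nhds hη))
  refine ⟨m₀ + 1, by positivity, fun m => ?_⟩
  have htriv : ({k : ℕ | k ≤ m ∧ m < π k}.ncard : ℝ) ≤ m + 1 := by
    have := Set.ncard_le_ncard (s := {k : ℕ | k ≤ m ∧ m < π k}) (t := Set.Iic m)
      (fun k hk => hk.1) (Set.finite_Iic m)
    rw [Set.ncard_eq_toFinset_card' (Set.Iic m)] at this
    simp only [Set.toFinset_Iic, Nat.card_Iic] at this
    exact_mod_cast this
  have hηm : 0 ≤ η * m := by positivity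
  rcases lt_or_ge m (m₀ + 1) with hm | hm
  · have : (m : ℝ) ≤ m₀ := by exact_mod_cast Nat.lt_succ_iff.1 hm
    linarith
  · have hpos : (0 : ℝ) < m := by exact_mod_cast (by lia : 0 < m)
    have := (div_lt_iff₀ hpos).1 (hm₀ m (by lia))
    have : (0 : ℝ) ≤ m₀ := by positivity
    linarith

/-- An interval `[a, b)` of length at least `M` contains a multiple of `M`. -/
lemma exists_mul_mem_Ico {a b M K : ℕ} (hM : 0 < M) (hab : a + M ≤ b) (haK : a ≤ K * M) :
    ∃ i ≤ K, a ≤ i * M ∧ i * M < b := by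
  have h := Nat.find_spec (⟨K, haK⟩ : ∃ i, a ≤ i * M)
  have hle : Nat.find (⟨K, haK⟩ : ∃ i, a ≤ i * M) ≤ K := Nat.find_min' _ haK
  refine ⟨_, hle, h, ?_⟩
  rcases Nat.eq_zero_or_pos (Nat.find (⟨K, haK⟩ : ∃ i, a ≤ i * M)) with h0 | h0
  · rw [h0]; lia
  · have hmin := Nat.find_min (⟨K, haK⟩ : ∃ i, a ≤ i * M) (Nat.sub_lt h0 one_pos)
    rw [Nat.sub_one_mul] at hmin
    lia

/-- If `f` is eventually below every `δ n`, then `f n / n` tends to zero. -/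
lemma tendsto_div_zero_of_forall_le {f : ℕ → ℝ} (hf : ∀ n, 0 ≤ f n)
    (h : ∀ δ : ℝ, 0 < δ → ∀ᶠ n : ℕ in atTop, f n ≤ δ * n) :
    Tendsto (fun n : ℕ => f n / n) atTop (𝓝 0) := by
  refine tendsto_order.2 ⟨fun a ha => .of_forall fun n => ha.trans_le
    (div_nonneg (hf n) n.cast_nonneg), fun a ha => ?_⟩
  filter_upwards [h (a / 2) (by positivity), eventually_gt_atTop 0] with n hn hpos
  have hpos' : (0 : ℝ) < n := by exact_mod_cast hpos
  rw [div_lt_iff₀ hpos']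
  nlinarith

/-- Every `k ≤ K * M` moved by at least `M` crosses one of the cuts `0, M, …, K * M`. -/
lemma exists_mem_crossing {π : Equiv.Perm ℕ} {k M K : ℕ} (hM : 0 < M) (hk : k ≤ K * M)
    (hmove : k + M ≤ π k ∨ π k + M ≤ k) : ∃ i ≤ K, k ∈ crossing π (i * M) := by
  rcases hmove with h | h
  · obtain ⟨i, hi, h₁, h₂⟩ := exists_mul_mem_Ico hM h hk
    exact ⟨i, hi, .inl ⟨h₁, h₂⟩⟩
  · obtain ⟨i, hi, h₁, h₂⟩ := exists_mul_mem_Ico (K := K) hM h (by lia)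
    exact ⟨i, hi, .inr ⟨h₁, h₂⟩⟩

lemma ncard_Icc_one_floor_le {x : ℝ} (hx : 0 ≤ x) : ((Set.Icc 1 ⌊x⌋₊).ncard : ℝ) ≤ x := by
  rw [Set.ncard_eq_toFinset_card']
  simpa using Nat.floor_le hx

lemma InLevyGroup.statTendsto {π : Equiv.Perm ℕ} (h : InLevyGroup π) :
    StatTendsto (fun n : ℕ => (π n : ℝ) / n) 1 := by
  intro ε hε
  refine tendsto_div_zero_of_forall_le (count_nonneg _) fun δ hδ => ?_
  obtain ⟨K, hK⟩ := exists_nat_gt (2 / (ε * (δ / 3)))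
  have hK0 : (0 : ℝ) < K := lt_trans (by positivity) hK
  have hK0' : 0 < K := by exact_mod_cast hK0
  obtain ⟨C, hC, hbound⟩ := h.exists_ncard_le (η := δ / 3 / (2 * (K + 1))) (by positivity)
  have hlarge (c : ℝ) : ∀ᶠ N : ℕ in atTop, c ≤ N :=
    tendsto_natCast_atTop_atTop.eventually_ge_atTop c
  filter_upwards [hlarge (2 / (ε * (δ / 3))), hlarge ((δ / 3 * K + 2 * (K + 1) * C) / (δ / 3))]
    with N hN₁ hN₂
  set M := N / K + 1 with hMdef
  have hNM : N ≤ K * M := by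
    have := Nat.lt_mul_div_succ N hK0'
    exact this.le
  have hMle : (M : ℝ) ≤ ε * (δ / 3 * N) := by
    have h₁ : ((N / K : ℕ) : ℝ) ≤ N / K := Nat.cast_div_le
    have h₂ : (N : ℝ) / K ≤ ε * (δ / 3) / 2 * N := by
      rw [div_le_iff₀ hK0]
      rw [div_lt_iff₀ (by positivity)] at hK
      nlinarith [(Nat.cast_nonneg N : (0 : ℝ) ≤ N)]
    rw [div_le_iff₀ (by positivity)] at hN₁
    push_cast [hMdef]
    linarith
  have hKM : ((K * M : ℕ) : ℝ) ≤ N + K := by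
    exact_mod_cast (by rw [hMdef, mul_add, mul_one]; gcongr; exact Nat.mul_div_le N K :
      K * M ≤ N + K)
  have hsub : {n : ℕ | ε ≤ |(π n : ℝ) / n - 1|} ∩ Set.Icc 1 N ⊆
      Set.Icc 1 ⌊δ / 3 * N⌋₊ ∪ ⋃ i ∈ Finset.range (K + 1), crossing π (i * M) := by
    rintro k ⟨hkε, hk1, hkN⟩
    rcases le_or_gt k ⌊δ / 3 * N⌋₊ with hk | hk
    · exact .inl ⟨hk1, hk⟩
    refine .inr ?_
    have hkpos : (0 : ℝ) < k := by exact_mod_cast hk1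
    have hk' : δ / 3 * N < k := (Nat.floor_lt (by positivity)).1 hk
    have hdist : (M : ℝ) ≤ |(π k : ℝ) - k| := by
      have : |(π k : ℝ) - k| = |(π k : ℝ) / k - 1| * k := by
        rw [← abs_of_pos hkpos, ← abs_mul, abs_of_pos hkpos, sub_mul, one_mul,
          div_mul_cancel₀ _ hkpos.ne']
      rw [this]
      calc (M : ℝ) ≤ ε * (δ / 3 * N) := hMle
        _ ≤ ε * k := by gcongr
        _ ≤ _ := by gcongr; exact hkε
    obtain ⟨i, hi, hcross⟩ := exists_mem_crossing (π := π) (k := k) (M := M) (K := K)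
      (Nat.succ_pos _) (hkN.trans hNM) <| by
        rcases le_abs.1 hdist with h | h
        · left
          have : (k : ℝ) + M ≤ π k := by linarith
          exact_mod_cast this
        · right
          have : (π k : ℝ) + M ≤ k := by linarith
          exact_mod_cast this
    simp only [Set.mem_iUnion, Finset.mem_range]
    exact ⟨i, by lia, hcross⟩
  have hfin : (⋃ i ∈ Finset.range (K + 1), crossing π (i * M)).Finite :=
    (Finset.range (K + 1)).finite_toSet.biUnion fun i _ => finite_crossing π (i * M)
  have hcross : ∀ i ∈ Finset.range (K + 1), ((crossing π (i * M)).ncard : ℝ) ≤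
      2 * (δ / 3 / (2 * (K + 1)) * (N + K) + C) := by
    intro i hi
    have h₁ : ((crossing π (i * M)).ncard : ℝ) ≤
        2 * ({k : ℕ | k ≤ i * M ∧ i * M < π k}.ncard : ℝ) := by
      exact_mod_cast ncard_crossing_le π (i * M)
    have h₂ : ((i * M : ℕ) : ℝ) ≤ N + K := by
      refine le_trans ?_ hKM
      exact_mod_cast Nat.mul_le_mul_right M (Nat.lt_succ_iff.1 (Finset.mem_range.1 hi))
    refine h₁.trans ?_
    gcongr
    exact (hbound _).trans (by gcongr)
  have hunion : ((⋃ i ∈ Finset.range (K + 1), crossing π (i * M)).ncard : ℝ) ≤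
      δ / 3 * (N + K) + 2 * (K + 1) * C := by
    calc _ ≤ ∑ i ∈ Finset.range (K + 1), ((crossing π (i * M)).ncard : ℝ) := by
          exact_mod_cast Finset.set_ncard_biUnion_le _ _
      _ ≤ (K + 1) * (2 * (δ / 3 / (2 * (K + 1)) * (N + K) + C)) := by
          simpa using Finset.sum_le_card_nsmul _ _ _ hcross
      _ = _ := by field_simp
  rw [div_le_iff₀ (by positivity)] at hN₂
  calc count {n : ℕ | ε ≤ |(π n : ℝ) / n - 1|} N
      ≤ ((Set.Icc 1 ⌊δ / 3 * N⌋₊).ncard : ℝ) +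
        (⋃ i ∈ Finset.range (K + 1), crossing π (i * M)).ncard := by
        unfold count
        exact_mod_cast (Set.ncard_le_ncard hsub ((Set.finite_Icc _ _).union hfin)).trans
          (Set.ncard_union_le _ _)
    _ ≤ δ / 3 * N + (δ / 3 * (N + K) + 2 * (K + 1) * C) :=
        add_le_add (ncard_Icc_one_floor_le (by positivity)) hunion
    _ ≤ δ * N := by linarith

lemma inLevyGroup_of_statTendsto {π : Equiv.Perm ℕ}
    (h : StatTendsto (fun n : ℕ => (π n : ℝ) / n) 1) : InLevyGroup π := by
  refine tendsto_div_zero_of_forall_le (fun _ => Nat.cast_nonneg _) fun δ hδ => ?_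
  have hδ3 : 0 < δ / 3 := by positivity
  filter_upwards [(h (δ / 3) hδ3).eventually (gt_mem_nhds hδ3), eventually_gt_atTop 0,
    tendsto_natCast_atTop_atTop.eventually_ge_atTop (2 / (δ / 3))] with n hn hpos hlarge
  have hpos' : (0 : ℝ) < n := by exact_mod_cast hpos
  have hcount := (div_lt_iff₀ hpos').1 hn
  rw [div_le_iff₀ hδ3] at hlarge
  set B := {k : ℕ | δ / 3 ≤ |(π k : ℝ) / k - 1|} ∩ Set.Icc 1 n with hB
  have hsub : {k : ℕ | k ≤ n ∧ n < π k} ⊆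
      ({0} ∪ B) ∪ Set.Ioc ⌊n / (1 + δ / 3)⌋₊ n := by
    rintro k ⟨hkn, hnk⟩
    rcases Nat.eq_zero_or_pos k with rfl | hk
    · exact .inl (.inl rfl)
    by_cases hkδ : δ / 3 ≤ |(π k : ℝ) / k - 1|
    · exact .inl (.inr ⟨hkδ, hk, hkn⟩)
    refine .inr ⟨(Nat.floor_lt (by positivity)).2 ?_, hkn⟩
    have hkpos : (0 : ℝ) < k := by exact_mod_cast hk
    have h₁ : (π k : ℝ) / k < 1 + δ / 3 := by linarith [(abs_lt.1 (not_le.1 hkδ)).2]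
    rw [div_lt_iff₀ hkpos] at h₁
    have h₂ : (n : ℝ) < π k := by exact_mod_cast hnk
    rw [div_lt_iff₀ (by positivity)]
    linarith
  have hIoc : ((Set.Ioc ⌊n / (1 + δ / 3)⌋₊ n).ncard : ℝ) ≤ δ / 3 * n + 1 := by
    have hle : ⌊n / (1 + δ / 3)⌋₊ ≤ n :=
      Nat.floor_le_of_le (div_le_self hpos'.le (by linarith))
    rw [Set.ncard_eq_toFinset_card', Set.toFinset_Ioc, Nat.card_Ioc, Nat.cast_sub hle]
    have h₁ := Nat.lt_floor_add_one ((n : ℝ) / (1 + δ / 3))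
    have h₂ : (n : ℝ) - δ / 3 * n ≤ n / (1 + δ / 3) := by
      rw [le_div_iff₀ (by positivity)]
      nlinarith [mul_pos hpos' (mul_pos hδ3 hδ3)]
    linarith
  have hfin : (({0} ∪ B) ∪ Set.Ioc ⌊n / (1 + δ / 3)⌋₊ n).Finite :=
    ((Set.finite_singleton 0).union ((Set.finite_Icc _ _).inter_of_right _)).union
      (Set.finite_Ioc _ _)
  have hcard : ({k : ℕ | k ≤ n ∧ n < π k}.ncard : ℝ) ≤
      1 + (B.ncard : ℝ) + (Set.Ioc ⌊n / (1 + δ / 3)⌋₊ n).ncard := by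
    have h₁ := Set.ncard_le_ncard hsub hfin
    have h₂ := Set.ncard_union_le ({0} ∪ B) (Set.Ioc ⌊n / (1 + δ / 3)⌋₊ n)
    have h₃ := Set.ncard_union_le {0} B
    rw [Set.ncard_singleton] at h₃
    exact_mod_cast (by lia : {k : ℕ | k ≤ n ∧ n < π k}.ncard ≤
      1 + B.ncard + (Set.Ioc ⌊n / (1 + δ / 3)⌋₊ n).ncard)
  change (B.ncard : ℝ) < _ at hcount
  linarith

/-- A permutation `π` belongs to the Lévy group iff `π(n)/n` converges
statistically to `1`. -/
theorem inLevyGroup_iff_statTendsto (π : Equiv.Perm ℕ) :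
    InLevyGroup π ↔ StatTendsto (fun n : ℕ => (π n : ℝ) / n) 1 :=
  ⟨InLevyGroup.statTendsto, inLevyGroup_of_statTendsto⟩
end

section
/- A finitely additive measure μ on the positive integers is a density measure if and only if μ(A) = μ(πA) for every set A ⊆ ℕ and every permutation π of ℕ satisfying lim_{n→∞} π(n)/n = 1. -/
open Filter Topology

open Classical in
/-- The number of elements of `A` in `[0, n)`. -/
noncomputable def countLT (A : Set ℕ) (n : ℕ) : ℕ := Nat.count (· ∈ A) n

lemma countLT_zero (A : Set ℕ) : countLT A 0 = 0 := by simp [countLT]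

open Classical in
lemma countLT_succ (A : Set ℕ) (n : ℕ) :
    countLT A (n + 1) = countLT A n + if n ∈ A then 1 else 0 := by
  simp [countLT, Nat.count_succ]

lemma countLT_union {A B : Set ℕ} (h : Disjoint A B) (n : ℕ) :
    countLT (A ∪ B) n = countLT A n + countLT B n := by
  induction n with
  | zero => simp [countLT_zero]
  | succ n ih =>
    have hn : ¬(n ∈ A ∧ n ∈ B) := fun hAB => Set.disjoint_left.mp h hAB.1 hAB.2
    simp only [countLT_succ, ih, Set.mem_union]
    by_cases hA : n ∈ A <;> by_cases hB : n ∈ B <;> simp_all <;> omega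

lemma countLT_univ (n : ℕ) : countLT Set.univ n = n := by
  simp [countLT]

lemma countLT_add_compl (A : Set ℕ) (n : ℕ) : countLT A n + countLT Aᶜ n = n := by
  rw [← countLT_union disjoint_compl_right, Set.union_compl_self, countLT_univ]

lemma countLT_diff_add_inter (A B : Set ℕ) (n : ℕ) :
    countLT (A \ B) n + countLT (A ∩ B) n = countLT A n := by
  rw [← countLT_union Set.disjoint_sdiff_inter, Set.sdiff_union_inter]

lemma countLT_mono {A B : Set ℕ} (h : A ⊆ B) (n : ℕ) : countLT A n ≤ countLT B n := by
  rw [← Set.union_sdiff_cancel h, countLT_union Set.disjoint_sdiff_right]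
  omega

open Classical in
lemma countLT_eq_card_filter (A : Set ℕ) (n : ℕ) :
    countLT A n = ((Finset.range n).filter (· ∈ A)).card := by
  rw [countLT, Nat.count_eq_card_filter_range]

open Classical in
lemma count_eq_countLT (A : Set ℕ) (n : ℕ) :
    count A n + (if 0 ∈ A then 1 else 0) = countLT A n + if n ∈ A then 1 else 0 := by
  have h : (A ∩ Set.Icc 1 n).ncard + (if 0 ∈ A then 1 else 0) = countLT A (n + 1) := by
    rw [countLT_eq_card_filter]
    have hset : A ∩ Set.Icc 1 n
        = (((Finset.range (n + 1)).filter (· ∈ A)).erase 0 : Finset ℕ) := by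
      ext k
      simp only [Set.mem_inter_iff, Set.mem_Icc, Finset.coe_erase, Finset.coe_filter,
        Finset.mem_range, Set.mem_sdiff, Set.mem_ofPred_eq, Set.mem_singleton_iff]
      constructor
      · rintro ⟨h1, h2, h3⟩
        exact ⟨⟨by omega, h1⟩, by omega⟩
      · rintro ⟨⟨h1, h2⟩, h3⟩
        exact ⟨h2, by omega, by omega⟩
    rw [hset, Set.ncard_coe_finset]
    split_ifs with h0
    · exact Finset.card_erase_add_one (by simp [h0])
    · rw [Finset.erase_eq_of_notMem (by simp [h0]), add_zero]
  rw [countLT_succ] at h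
  unfold count
  exact_mod_cast h

/-- A bounded sequence divided by `n` tends to zero. -/
lemma tendsto_div_natCast_of_abs_le {f : ℕ → ℝ} {C : ℝ} (h : ∀ n, |f n| ≤ C) :
    Tendsto (fun n : ℕ => f n / n) atTop (𝓝 0) := by
  refine squeeze_zero_norm (fun n => ?_) (tendsto_const_div_atTop_nhds_zero_nat C)
  rw [Real.norm_eq_abs, abs_div, Nat.abs_cast]
  gcongr
  exact h n

lemma hasDensity_iff_countLT {A : Set ℕ} {a : ℝ} :
    HasDensity A a ↔ Tendsto (fun n : ℕ => (countLT A n : ℝ) / n) atTop (𝓝 a) := by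
  classical
  have h : Tendsto (fun n : ℕ => (count A n - countLT A n) / n) atTop (𝓝 0) := by
    refine tendsto_div_natCast_of_abs_le (C := 1) fun n => ?_
    have := count_eq_countLT A n
    rw [abs_le]
    split_ifs at this <;> constructor <;> linarith
  refine ⟨fun H => ?_, fun H => ?_⟩
  · simpa [sub_div] using Tendsto.sub H h
  · have := Tendsto.add H h
    simp only [sub_div, add_sub_cancel, add_zero] at this
    exact this

lemma HasDensity.union {A B : Set ℕ} {a b : ℝ} (hA : HasDensity A a) (hB : HasDensity B b)
    (h : Disjoint A B) : HasDensity (A ∪ B) (a + b) := by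
  rw [hasDensity_iff_countLT] at *
  simpa [countLT_union h, add_div] using Tendsto.add hA hB

lemma HasDensity.diff {A B : Set ℕ} {a b : ℝ} (hA : HasDensity A a) (hB : HasDensity B b)
    (h : B ⊆ A) : HasDensity (A \ B) (a - b) := by
  rw [hasDensity_iff_countLT] at *
  refine (Tendsto.sub hA hB).congr fun n => ?_
  have h1 : (countLT (A \ B) n : ℝ) + countLT B n = countLT A n := by
    exact_mod_cast Set.inter_eq_right.mpr h ▸ countLT_diff_add_inter A B n
  rw [← h1]
  ring

lemma HasDensity.of_subset_zero {A B : Set ℕ} (hB : HasDensity B 0) (h : A ⊆ B) :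
    HasDensity A 0 := by
  rw [hasDensity_iff_countLT] at *
  refine squeeze_zero (fun n => by positivity) (fun n => ?_) hB
  gcongr
  exact countLT_mono h n

lemma HasDensity.mem_Icc {A : Set ℕ} {a : ℝ} (h : HasDensity A a) : a ∈ Set.Icc 0 1 := by
  rw [hasDensity_iff_countLT] at h
  refine isClosed_Icc.mem_of_tendsto h (Eventually.of_forall fun n => ⟨by positivity, ?_⟩)
  refine div_le_one_of_le₀ ?_ (by positivity)
  have := countLT_add_compl A n
  exact_mod_cast (by omega : countLT A n ≤ n)

lemma HasDensity.infinite {A : Set ℕ} {a : ℝ} (h : HasDensity A a) (ha : 0 < a) :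
    A.Infinite := by
  classical
  intro hfin
  rw [hasDensity_iff_countLT] at h
  refine ha.ne' (tendsto_nhds_unique h
    (tendsto_div_natCast_of_abs_le (C := hfin.toFinset.card) fun n => ?_))
  rw [Nat.abs_cast, countLT_eq_card_filter]
  exact_mod_cast Finset.card_le_card fun k hk => by simpa using (Finset.mem_filter.mp hk).2

lemma hasDensity_univ : HasDensity Set.univ 1 := by
  rw [hasDensity_iff_countLT]
  refine tendsto_const_nhds.congr' ?_
  filter_upwards [eventually_gt_atTop 0] with n hn
  rw [countLT_univ, div_self (by positivity)]

/-- Every set has a subset whose counting function is `⌊t · A(n)⌋`. -/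
lemma exists_subset_countLT_eq_floor (A : Set ℕ) {t : ℝ} (ht0 : 0 ≤ t) (ht1 : t ≤ 1) :
    ∃ C ⊆ A, ∀ n, countLT C n = ⌊t * countLT A n⌋₊ := by
  refine ⟨{x ∈ A | ⌊t * countLT A x⌋₊ < ⌊t * (countLT A x + 1)⌋₊}, fun x hx => hx.1, fun n => ?_⟩
  induction n with
  | zero => simp [countLT_zero]
  | succ n ih =>
    have hub : ⌊t * (countLT A n + 1)⌋₊ ≤ ⌊t * countLT A n⌋₊ + 1 := by
      rw [← Nat.floor_add_one (by positivity)]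
      exact Nat.floor_le_floor (by linarith)
    have hlb : ⌊t * countLT A n⌋₊ ≤ ⌊t * (countLT A n + 1)⌋₊ :=
      Nat.floor_le_floor (by linarith)
    rw [countLT_succ, countLT_succ, ih]
    by_cases hA : n ∈ A
    · simp only [Set.mem_ofPred_eq, hA, true_and, if_true, Nat.cast_add, Nat.cast_one]
      split_ifs <;> omega
    · simp [hA]

lemma abs_natFloor_sub_le {x : ℝ} (hx : 0 ≤ x) : |(⌊x⌋₊ : ℝ) - x| ≤ 1 := by
  rw [abs_le]
  constructor <;> linarith [Nat.floor_le hx, Nat.lt_floor_add_one x]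

lemma HasDensity.exists_subset {A : Set ℕ} {a t : ℝ} (h : HasDensity A a) (ht0 : 0 ≤ t)
    (ht1 : t ≤ 1) : ∃ C ⊆ A, HasDensity C (t * a) := by
  obtain ⟨C, hCA, hC⟩ := exists_subset_countLT_eq_floor A ht0 ht1
  refine ⟨C, hCA, ?_⟩
  rw [hasDensity_iff_countLT] at *
  have h0 : Tendsto (fun n : ℕ => ((countLT C n : ℝ) - t * countLT A n) / n) atTop (𝓝 0) :=
    tendsto_div_natCast_of_abs_le (C := 1) fun n => by
      rw [hC]; exact abs_natFloor_sub_le (by positivity)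
  have := h0.add (h.const_mul t)
  rw [zero_add] at this
  exact this.congr fun n => by ring

/-! ### Density measures are invariant -/

lemma IsFAMeasure.union {μ : Set ℕ → ℝ} (hμ : IsFAMeasure μ) {A B : Set ℕ} (h : Disjoint A B) :
    μ (A ∪ B) = μ A + μ B := hμ.2.2.2 A B h

lemma IsFAMeasure.diff_add_inter {μ : Set ℕ → ℝ} (hμ : IsFAMeasure μ) (A B : Set ℕ) :
    μ (A \ B) + μ (A ∩ B) = μ A := by
  rw [← hμ.union Set.disjoint_sdiff_inter, Set.sdiff_union_inter]

/-- A density measure does not distinguish sets whose counting functions differ by `o(n)`. -/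
lemma IsDensityMeasure.eq_of_countLT_sub {μ : Set ℕ → ℝ} (hμ : IsDensityMeasure μ) {A B : Set ℕ}
    (h : Tendsto (fun n : ℕ => ((countLT A n : ℝ) - countLT B n) / n) atTop (𝓝 0)) :
    μ A = μ B := by
  have key : ∀ A B C : Set ℕ, C ⊆ (A \ B ∪ B \ A)ᶜ →
      (∀ n, countLT C n = ⌊(1 / 2 : ℝ) * countLT (A \ B ∪ B \ A)ᶜ n⌋₊) →
      Tendsto (fun n : ℕ => ((countLT A n : ℝ) - countLT B n) / n) atTop (𝓝 0) →
      μ (A \ B) + μ C = 1 / 2 := by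
    intro A B C hCD hC h
    have hdisj : Disjoint (A \ B) C :=
      Set.disjoint_left.mpr fun x hx hxC => hCD hxC (Or.inl hx)
    rw [← hμ.1.union hdisj]
    refine hμ.2 _ _ (hasDensity_iff_countLT.mpr ?_)
    have h0 : Tendsto (fun n : ℕ =>
        ((countLT C n : ℝ) - 1 / 2 * countLT (A \ B ∪ B \ A)ᶜ n) / n) atTop (𝓝 0) :=
      tendsto_div_natCast_of_abs_le (C := 1) fun n => by
        rw [hC]; exact abs_natFloor_sub_le (by positivity)
    have h1 := (h0.add (h.const_mul (1 / 2))).add_const (1 / 2 : ℝ)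
    simp only [mul_zero, add_zero, zero_add] at h1
    refine h1.congr' ?_
    filter_upwards [eventually_gt_atTop 0] with n hn
    have hn' : (n : ℝ) ≠ 0 := by positivity
    have e1 : (countLT (A \ B) n : ℝ) + countLT (A ∩ B) n = countLT A n := by
      exact_mod_cast countLT_diff_add_inter A B n
    have e2 : (countLT (B \ A) n : ℝ) + countLT (A ∩ B) n = countLT B n := by
      rw [Set.inter_comm]
      exact_mod_cast countLT_diff_add_inter B A n
    have e3 : (countLT (A \ B) n : ℝ) + countLT (B \ A) n
        + countLT (A \ B ∪ B \ A)ᶜ n = n := by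
      have := countLT_add_compl (A \ B ∪ B \ A) n
      rw [countLT_union disjoint_sdiff_sdiff] at this
      exact_mod_cast this
    rw [countLT_union hdisj, Nat.cast_add]
    field_simp
    linarith
  obtain ⟨C, hCD, hC⟩ := exists_subset_countLT_eq_floor (A \ B ∪ B \ A)ᶜ
    (t := 1 / 2) (by norm_num) (by norm_num)
  have hA := key A B C hCD hC h
  have hB := key B A C (Set.union_comm (A \ B) _ ▸ hCD) (Set.union_comm (A \ B) _ ▸ hC)
    (by simpa [← neg_div] using h.neg)
  have e1 := hμ.1.diff_add_inter A B
  have e2 := hμ.1.diff_add_inter B A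
  rw [Set.inter_comm] at e2
  linarith

lemma eventually_countLT_le_image {π : Equiv.Perm ℕ}
    (hπ : Tendsto (fun n : ℕ => (π n : ℝ) / n) atTop (𝓝 1)) (A : Set ℕ) {ε : ℝ} (hε : 0 < ε) :
    ∀ᶠ n : ℕ in atTop, (countLT A n : ℝ) ≤ countLT (π '' A) n + ε * n := by
  classical
  obtain ⟨K, hK⟩ := eventually_atTop.mp
    ((hπ.eventually (gt_mem_nhds (show (1 : ℝ) < 1 + ε / 2 by linarith))).and
      (eventually_gt_atTop 0))
  filter_upwards [tendsto_natCast_atTop_atTop.eventually_ge_atTop (K / (ε / 2))] with n hn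
  set m := ⌈(n : ℝ) / (1 + ε / 2)⌉₊
  have hsub : (Finset.range n).filter (· ∈ A) ⊆
      (((Finset.range n).filter (· ∈ π '' A)).image π.symm ∪ Finset.range K) ∪
        Finset.Ico m n := by
    intro k hk
    simp only [Finset.mem_filter, Finset.mem_range] at hk
    simp only [Finset.mem_union, Finset.mem_image, Finset.mem_filter, Finset.mem_range,
      Finset.mem_Ico]
    by_cases hkK : k < K
    · exact Or.inl (Or.inr hkK)
    by_cases hkm : m ≤ k
    · exact Or.inr ⟨hkm, hk.1⟩
    refine Or.inl (Or.inl ⟨π k, ⟨?_, Set.mem_image_of_mem _ hk.2⟩, by simp⟩)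
    obtain ⟨h1, h2⟩ := hK k (not_lt.mp hkK)
    have h3 := Nat.lt_ceil.mp (not_le.mp hkm)
    rw [lt_div_iff₀ (by positivity)] at h3
    rw [div_lt_iff₀ (by exact_mod_cast h2)] at h1
    exact_mod_cast (by linarith : (π k : ℝ) < n)
  have hcard : countLT A n ≤ countLT (π '' A) n + K + (n - m) := by
    rw [countLT_eq_card_filter, countLT_eq_card_filter]
    refine (Finset.card_le_card hsub).trans ((Finset.card_union_le _ _).trans ?_)
    rw [Nat.card_Ico]
    refine Nat.add_le_add_right ?_ _
    refine (Finset.card_union_le _ _).trans ?_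
    rw [Finset.card_range]
    exact Nat.add_le_add_right Finset.card_image_le K
  have hnm : ((n - m : ℕ) : ℝ) ≤ ε / 2 * n := by
    have h1 : (n : ℝ) / (1 + ε / 2) ≤ m := Nat.le_ceil _
    rw [div_le_iff₀ (by positivity)] at h1
    rcases le_total n m with h | h
    · rw [Nat.sub_eq_zero_of_le h]
      simp only [Nat.cast_zero]
      positivity
    · rw [Nat.cast_sub h]
      have : (m : ℝ) ≤ n := by exact_mod_cast h
      nlinarith
  have hKn : (K : ℝ) ≤ ε / 2 * n := by
    rw [div_le_iff₀ (by positivity)] at hn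
    linarith
  have : (countLT A n : ℝ) ≤ countLT (π '' A) n + K + (n - m : ℕ) := by exact_mod_cast hcard
  linarith

lemma tendsto_countLT_sub_image {π : Equiv.Perm ℕ}
    (hπ : Tendsto (fun n : ℕ => (π n : ℝ) / n) atTop (𝓝 1)) (A : Set ℕ) :
    Tendsto (fun n : ℕ => ((countLT A n : ℝ) - countLT (π '' A) n) / n) atTop (𝓝 0) := by
  rw [Metric.tendsto_nhds]
  intro ε hε
  filter_upwards [eventually_countLT_le_image hπ A (half_pos hε),
    eventually_countLT_le_image hπ Aᶜ (half_pos hε), eventually_gt_atTop 0] with n h1 h2 hn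
  have hn' : (0 : ℝ) < n := by exact_mod_cast hn
  have e1 : (countLT A n : ℝ) + countLT Aᶜ n = n := by exact_mod_cast countLT_add_compl A n
  have e2 : (countLT (π '' A) n : ℝ) + countLT (π '' Aᶜ) n = n := by
    rw [Set.image_compl_eq π.bijective]
    exact_mod_cast countLT_add_compl (π '' A) n
  rw [Real.dist_eq, sub_zero, abs_div, Nat.abs_cast, div_lt_iff₀ hn', abs_lt]
  constructor <;> nlinarith

/-! ### Invariant measures are density measures -/

lemma countLT_nth {A : Set ℕ} (hA : A.Infinite) (k : ℕ) :
    countLT A (Nat.nth (· ∈ A) k) = k := by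
  classical exact Nat.count_nth_of_infinite (p := (· ∈ A)) hA k

lemma nth_countLT {A : Set ℕ} {n : ℕ} (hn : n ∈ A) : Nat.nth (· ∈ A) (countLT A n) = n := by
  classical exact Nat.nth_count hn

open Classical in
/-- The map sending the `k`-th element of `A` to the `k`-th element of `B`, and the `k`-th element
of `Aᶜ` to the `k`-th element of `Bᶜ`. -/
noncomputable def matchFun (A B : Set ℕ) (n : ℕ) : ℕ :=
  if n ∈ A then Nat.nth (· ∈ B) (countLT A n) else Nat.nth (· ∈ Bᶜ) (countLT Aᶜ n)

lemma matchFun_mem {A B : Set ℕ} (hB : B.Infinite) {n : ℕ} (hn : n ∈ A) :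
    matchFun A B n ∈ B ∧ countLT B (matchFun A B n) = countLT A n := by
  rw [matchFun, if_pos hn]
  exact ⟨Nat.nth_mem_of_infinite hB _, countLT_nth hB _⟩

lemma matchFun_notMem {A B : Set ℕ} (hB : Bᶜ.Infinite) {n : ℕ} (hn : n ∉ A) :
    matchFun A B n ∉ B ∧ countLT Bᶜ (matchFun A B n) = countLT Aᶜ n := by
  rw [matchFun, if_neg hn]
  exact ⟨Nat.nth_mem_of_infinite (p := (· ∈ Bᶜ)) hB _, countLT_nth hB _⟩

lemma matchFun_leftInverse {A B : Set ℕ} (hB : B.Infinite) (hB' : Bᶜ.Infinite) :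
    Function.LeftInverse (matchFun B A) (matchFun A B) := by
  intro n
  by_cases hn : n ∈ A
  · obtain ⟨h1, h2⟩ := matchFun_mem hB hn
    rw [matchFun, if_pos h1, h2, nth_countLT hn]
  · obtain ⟨h1, h2⟩ := matchFun_notMem hB' hn
    rw [matchFun, if_neg h1, h2, nth_countLT (A := Aᶜ) hn]

/-- `matchFun` as a permutation. -/
noncomputable def matchPerm {A B : Set ℕ} (hA : A.Infinite) (hA' : Aᶜ.Infinite)
    (hB : B.Infinite) (hB' : Bᶜ.Infinite) : Equiv.Perm ℕ where
  toFun := matchFun A B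
  invFun := matchFun B A
  left_inv := matchFun_leftInverse hB hB'
  right_inv := matchFun_leftInverse hA hA'

lemma tendsto_div_of_countLT_eq {A B : Set ℕ} {a : ℝ} {f : ℕ → ℕ} {l : Filter ℕ}
    (hl : l ≤ atTop) (hA : HasDensity A a) (hB : HasDensity B a) (ha : 0 < a)
    (hf : Tendsto f l atTop) (h : ∀ᶠ n in l, countLT B (f n) = countLT A n) :
    Tendsto (fun n : ℕ => (f n : ℝ) / n) l (𝓝 1) := by
  rw [hasDensity_iff_countLT] at hA hB
  have hA' := hA.mono_left hl
  have hdiv := hA'.div (hB.comp hf) ha.ne'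
  rw [div_self ha.ne'] at hdiv
  refine hdiv.congr' ?_
  filter_upwards [h, hA'.eventually (lt_mem_nhds ha), hf.eventually_gt_atTop 0] with n hn h1 h2
  have h3 : (countLT A n : ℝ) ≠ 0 := by
    rintro h0
    simp [h0] at h1
  have h4 : (f n : ℝ) ≠ 0 := by positivity
  simp only [Pi.div_apply, Function.comp_apply, hn]
  field_simp

lemma exists_perm_image_eq {A B : Set ℕ} {a : ℝ} (hA : HasDensity A a) (hB : HasDensity B a)
    (ha0 : 0 < a) (ha1 : a < 1) :
    ∃ π : Equiv.Perm ℕ, Tendsto (fun n : ℕ => (π n : ℝ) / n) atTop (𝓝 1) ∧ π '' A = B := by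
  have hA' := hA.compl
  have hB' := hB.compl
  have ha' : 0 < 1 - a := by linarith
  have iA := hA.infinite ha0
  have iB := hB.infinite ha0
  have iA' := hA'.infinite ha'
  have iB' := hB'.infinite ha'
  set π := matchPerm iA iA' iB iB'
  have hπt : Tendsto π atTop atTop := by
    rw [← Nat.cofinite_eq_atTop]
    exact π.injective.tendsto_cofinite
  refine ⟨π, ?_, ?_⟩
  · have h1 : Tendsto (fun n : ℕ => (π n : ℝ) / n) (atTop ⊓ 𝓟 A) (𝓝 1) :=
      tendsto_div_of_countLT_eq inf_le_left hA hB ha0 (hπt.mono_left inf_le_left)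
        (eventually_inf_principal.mpr (Eventually.of_forall fun n hn => (matchFun_mem iB hn).2))
    have h2 : Tendsto (fun n : ℕ => (π n : ℝ) / n) (atTop ⊓ 𝓟 Aᶜ) (𝓝 1) :=
      tendsto_div_of_countLT_eq inf_le_left hA' hB' ha' (hπt.mono_left inf_le_left)
        (eventually_inf_principal.mpr
          (Eventually.of_forall fun n hn => (matchFun_notMem iB' hn).2))
    have := h1.sup h2
    rwa [← inf_sup_left, sup_principal, Set.union_compl_self, principal_univ, inf_top_eq] at this
  · ext m
    constructor
    · rintro ⟨n, hn, rfl⟩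
      exact (matchFun_mem iB hn).1
    · intro hm
      exact ⟨π.symm m, (matchFun_mem iA hm).1, π.apply_symm_apply m⟩

/-- A nonnegative function that is additive on `[0, 1]` with `g 1 = 1` is the identity there. -/
lemma eq_id_of_additive_on_unitInterval {g : ℝ → ℝ} (h0 : ∀ x, 0 ≤ g x) (h1 : g 1 = 1)
    (hadd : ∀ x y, 0 ≤ x → 0 ≤ y → x + y ≤ 1 → g (x + y) = g x + g y)
    {x : ℝ} (hx0 : 0 ≤ x) (hx1 : x ≤ 1) : g x = x := by
  have hmul : ∀ (m : ℕ) (y : ℝ), 0 ≤ y → m * y ≤ 1 → g (m * y) = m * g y := by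
    intro m y hy
    induction m with
    | zero =>
      intro _
      have := hadd 0 0 le_rfl le_rfl (by norm_num)
      simp only [add_zero, left_eq_add] at this
      simp [this]
    | succ m ih =>
      intro hm
      push_cast at hm ⊢
      rw [add_mul, one_mul] at hm ⊢
      rw [hadd _ _ (by positivity) hy hm, ih (by linarith)]
      ring
  have hlow : ∀ x : ℝ, 0 ≤ x → x ≤ 1 → x ≤ g x := by
    intro x hx0 hx1
    refine le_of_forall_pos_le_add fun ε hε => ?_
    obtain ⟨k, hk⟩ := exists_nat_one_div_lt hε
    have hk0 : (0 : ℝ) < k + 1 := by positivity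
    have hunit : g (1 / (k + 1)) = 1 / (k + 1) := by
      have := hmul (k + 1) (1 / (k + 1)) (by positivity)
      push_cast at this
      rw [mul_one_div_cancel hk0.ne', h1] at this
      rw [eq_div_iff hk0.ne', mul_comm]
      exact (this le_rfl).symm
    set m := ⌊x * (k + 1)⌋₊
    have hm1 : (m : ℝ) ≤ x * (k + 1) := Nat.floor_le (by positivity)
    have hm2 : x * (k + 1) < m + 1 := Nat.lt_floor_add_one _
    have hmx : (m : ℝ) * (1 / (k + 1)) ≤ x := by
      rwa [mul_one_div, div_le_iff₀ hk0]
    have hxm : x ≤ m * (1 / (k + 1)) + 1 / (k + 1) := by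
      rw [mul_one_div, ← add_div, le_div_iff₀ hk0]
      exact hm2.le
    have hg := hadd (m * (1 / (k + 1))) (x - m * (1 / (k + 1))) (by positivity)
      (by linarith) (by linarith)
    rw [add_sub_cancel, hmul _ _ (by positivity) (by linarith), hunit] at hg
    linarith [h0 (x - m * (1 / (k + 1)))]
  have := hadd x (1 - x) hx0 (by linarith) (by linarith)
  rw [add_sub_cancel, h1] at this
  linarith [hlow x hx0 hx1, hlow (1 - x) (by linarith) (by linarith)]

lemma exists_hasDensity {x : ℝ} (h0 : 0 ≤ x) (h1 : x ≤ 1) : ∃ A, HasDensity A x := by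
  obtain ⟨C, -, hC⟩ := hasDensity_univ.exists_subset h0 h1
  exact ⟨C, by simpa using hC⟩

section Invariant

variable {μ : Set ℕ → ℝ}

lemma IsFAMeasure.compl (hμ : IsFAMeasure μ) (A : Set ℕ) : μ A + μ Aᶜ = 1 := by
  rw [← hμ.union disjoint_compl_right, Set.union_compl_self, hμ.2.2.1]

/-- A finitely additive measure that is constant on sets of equal density in `(0, 1)` is
a density measure. -/
lemma IsFAMeasure.isDensityMeasure_of_eq (hμ : IsFAMeasure μ)
    (heq : ∀ (A B : Set ℕ) (a : ℝ), 0 < a → a < 1 → HasDensity A a → HasDensity B a → μ A = μ B) :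
    IsDensityMeasure μ := by
  have hdisj0 : ∀ A E : Set ℕ, HasDensity A 0 → HasDensity E (1 / 2) → μ (A \ E) = 0 := by
    intro A E hA hE
    have h1 := (hA.of_subset_zero Set.sdiff_subset).union hE (Set.disjoint_sdiff_left (t := A))
    rw [zero_add] at h1
    have h2 := heq _ _ _ (by norm_num) (by norm_num) h1 hE
    rw [hμ.union Set.disjoint_sdiff_left] at h2
    linarith
  have hzero : ∀ A : Set ℕ, HasDensity A 0 → μ A = 0 := by
    intro A hA
    obtain ⟨E, hE⟩ := exists_hasDensity (x := 1 / 2) (by norm_num) (by norm_num)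
    have h1 := hdisj0 A E hA hE
    have h2 := hdisj0 A Eᶜ hA (by convert hE.compl using 1; norm_num)
    rw [Set.sdiff_compl] at h2
    linarith [hμ.diff_add_inter A E]
  have hwd : ∀ (A B : Set ℕ) (a : ℝ), HasDensity A a → HasDensity B a → μ A = μ B := by
    intro A B a hA hB
    obtain ⟨h0, h1⟩ := hA.mem_Icc
    rcases h0.eq_or_lt with rfl | h0
    · rw [hzero A hA, hzero B hB]
    rcases h1.eq_or_lt with rfl | h1
    · have hA' := hA.compl
      have hB' := hB.compl
      rw [sub_self] at hA' hB'
      linarith [hμ.compl A, hμ.compl B, hzero _ hA', hzero _ hB']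
    · exact heq A B a h0 h1 hA hB
  have hex : ∀ x : ℝ, ∃ A : Set ℕ, 0 ≤ x → x ≤ 1 → HasDensity A x := by
    intro x
    by_cases hx : 0 ≤ x ∧ x ≤ 1
    · obtain ⟨A, hA⟩ := exists_hasDensity hx.1 hx.2
      exact ⟨A, fun _ _ => hA⟩
    · exact ⟨∅, fun h0 h1 => absurd ⟨h0, h1⟩ hx⟩
  choose S hS using hex
  refine ⟨hμ, fun A a hA => ?_⟩
  obtain ⟨ha0, ha1⟩ := hA.mem_Icc
  rw [hwd A (S a) a hA (hS a ha0 ha1)]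
  refine eq_id_of_additive_on_unitInterval (g := fun x => μ (S x)) (fun x => hμ.1 _) ?_ ?_ ha0 ha1
  · rw [hwd _ _ 1 (hS 1 zero_le_one le_rfl) hasDensity_univ, hμ.2.2.1]
  · intro x y hx hy hxy
    have hT := hS (x + y) (by linarith) hxy
    obtain ⟨C, hCS, hC⟩ := hT.exists_subset (t := x / (x + y)) (by positivity)
      (div_le_one_of_le₀ (by linarith) (by linarith))
    have hCx : HasDensity C x := by
      convert hC using 1
      rcases (add_nonneg hx hy).eq_or_lt with h | h
      · rw [← h, mul_zero]
        linarith
      · rw [div_mul_cancel₀ _ h.ne']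
    have hCy := hT.diff hCx hCS
    rw [add_sub_cancel_left] at hCy
    rw [← hwd C _ x hCx (hS x hx (by linarith)), ← hwd _ _ y hCy (hS y hy (by linarith)),
      ← hμ.union Set.disjoint_sdiff_right, Set.union_sdiff_cancel hCS]

end Invariant

/-- Van Douwen's characterization: a finitely additive measure `μ` on `ℕ` is a
density measure iff `μ(A) = μ(πA)` for every `A ⊆ ℕ` and every permutation `π`
with `π(n)/n → 1`. -/
theorem isDensityMeasure_iff_invariant_under_ratio_one_perms
    (μ : Set ℕ → ℝ) (hμ : IsFAMeasure μ) :
    IsDensityMeasure μ ↔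
      ∀ (A : Set ℕ) (π : Equiv.Perm ℕ),
        Filter.Tendsto (fun n : ℕ => (π n : ℝ) / n) Filter.atTop (nhds 1) →
        μ A = μ (π '' A) := by
  refine ⟨fun h A π hπ => h.eq_of_countLT_sub (tendsto_countLT_sub_image hπ A), fun h => ?_⟩
  refine hμ.isDensityMeasure_of_eq fun A B a h0 h1 hA hB => ?_
  obtain ⟨π, hπ, rfl⟩ := exists_perm_image_eq hA hB h0 h1
  exact h A π hπ
end

section
/- If π is a permutation in the Lévy group 𝒢 and μ is a density measure, then μ(πA) = μ(A) for every set A ⊆ ℕ. -/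
open Filter Topology

theorem ncard_inter_Icc_succ (A : Set ℕ) (n : ℕ) [Decidable (n + 1 ∈ A)] :
    (A ∩ Set.Icc 1 (n + 1)).ncard = (A ∩ Set.Icc 1 n).ncard + if n + 1 ∈ A then 1 else 0 := by
  split_ifs with h
  · have : A ∩ Set.Icc 1 (n + 1) = insert (n + 1) (A ∩ Set.Icc 1 n) := by
      ext k
      by_cases hk : k = n + 1
      · subst hk; simp [h]
      · simp only [Set.mem_inter_iff, Set.mem_Icc, Set.mem_insert_iff, hk, false_or]
        refine and_congr_right fun _ => ?_
        omega
    rw [this, Set.ncard_insert_of_notMem (by simp) ((Set.finite_Icc 1 n).inter_of_right A)]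
  · have : A ∩ Set.Icc 1 (n + 1) = A ∩ Set.Icc 1 n := by
      ext k
      by_cases hk : k = n + 1
      · subst hk; simp [h]
      · simp only [Set.mem_inter_iff, Set.mem_Icc]
        refine and_congr_right fun _ => ?_
        omega
    rw [this, add_zero]

/-- Every set of naturals has a subset containing every other element of it. -/
theorem exists_subset_count_half (D : Set ℕ) :
    ∃ E ⊆ D, ∀ n, (E ∩ Set.Icc 1 n).ncard = ((D ∩ Set.Icc 1 n).ncard + 1) / 2 := by
  classical
  refine ⟨{d | d ∈ D ∧ (D ∩ Set.Icc 1 d).ncard % 2 = 1}, fun _ h => h.1, fun n => ?_⟩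
  induction n with
  | zero => simp
  | succ n ih =>
    rw [ncard_inter_Icc_succ, ih]
    simp only [Set.mem_ofPred_eq, ncard_inter_Icc_succ]
    by_cases h : n + 1 ∈ D
    · simp only [h, if_true, true_and]
      split_ifs <;> omega
    · simp [h]

theorem count_union {A B : Set ℕ} (h : Disjoint A B) (n : ℕ) :
    count (A ∪ B) n = count A n + count B n := by
  have hf (S : Set ℕ) : (S ∩ Set.Icc 1 n).Finite := (Set.finite_Icc 1 n).inter_of_right S
  rw [count, count, count, Set.union_inter_distrib_right,
    Set.ncard_union_eq (h.mono Set.inter_subset_left Set.inter_subset_left) (hf A) (hf B)]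
  push_cast
  rfl

theorem count_univ (n : ℕ) : count Set.univ n = n := by
  simp [count, Set.ncard_eq_toFinset_card']

/-- If `A`, `B` are disjoint with asymptotically equal counting functions and `E` is half of the
complement of `A ∪ B`, then `A ∪ E` has density `1 / 2`. -/
theorem hasDensity_union_half {A B E : Set ℕ} (hAB : Disjoint A B) (hE : E ⊆ (A ∪ B)ᶜ)
    (hhalf : ∀ n, (E ∩ Set.Icc 1 n).ncard = (((A ∪ B)ᶜ ∩ Set.Icc 1 n).ncard + 1) / 2)
    (h : Tendsto (fun n : ℕ => (count A n - count B n) / n) atTop (𝓝 0)) :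
    HasDensity (A ∪ E) (1 / 2) := by
  have hAE : Disjoint A E := Set.disjoint_left.2 fun x hx hxE => hE hxE (Or.inl hx)
  have hbound (n : ℕ) : |2 * count E n - count (A ∪ B)ᶜ n| ≤ 1 := by
    have h1 := hhalf n
    have h2 : 2 * (E ∩ Set.Icc 1 n).ncard ≤ ((A ∪ B)ᶜ ∩ Set.Icc 1 n).ncard + 1 := by omega
    have h3 : ((A ∪ B)ᶜ ∩ Set.Icc 1 n).ncard ≤ 2 * (E ∩ Set.Icc 1 n).ncard := by omega
    have h2' : 2 * count E n ≤ count (A ∪ B)ᶜ n + 1 := by unfold count; exact_mod_cast h2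
    have h3' : count (A ∪ B)ᶜ n ≤ 2 * count E n := by unfold count; exact_mod_cast h3
    rw [abs_le]
    constructor <;> linarith
  have hzero : Tendsto (fun n : ℕ => (2 * count E n - count (A ∪ B)ᶜ n) / n) atTop (𝓝 0) := by
    refine squeeze_zero_norm (fun n => ?_) tendsto_one_div_atTop_nhds_zero_nat
    rw [norm_div, Real.norm_eq_abs, Real.norm_natCast]
    gcongr
    exact hbound n
  have hlim := ((h.add hzero).div_const 2).const_add (1 / 2 : ℝ)
  simp only [add_zero, zero_div] at hlim
  refine hlim.congr' ?_
  filter_upwards [eventually_gt_atTop 0] with n hn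
  have hn' : (n : ℝ) ≠ 0 := by positivity
  have huniv : count A n + count B n + count (A ∪ B)ᶜ n = n := by
    rw [← count_union hAB, ← count_union disjoint_compl_right, Set.union_compl_self, count_univ]
  rw [count_union hAE]
  field_simp
  linarith

/-- A density measure does not distinguish sets with asymptotically equal counting functions. -/
theorem IsDensityMeasure.eq_of_tendsto {μ : Set ℕ → ℝ} (hμ : IsDensityMeasure μ) {A B : Set ℕ}
    (h : Tendsto (fun n : ℕ => (count A n - count B n) / n) atTop (𝓝 0)) : μ A = μ B := by
  obtain ⟨⟨-, -, -, hadd⟩, hdens⟩ := hμ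
  have key : ∀ {A B : Set ℕ}, Disjoint A B →
      Tendsto (fun n : ℕ => (count A n - count B n) / n) atTop (𝓝 0) → μ A = μ B := by
    intro A B hAB h
    obtain ⟨E, hE, hhalf⟩ := exists_subset_count_half (A ∪ B)ᶜ
    have h' : Tendsto (fun n : ℕ => (count B n - count A n) / n) atTop (𝓝 0) := by
      simpa [← neg_div] using h.neg
    have hA := hdens _ _ (hasDensity_union_half hAB hE hhalf h)
    have hB := hdens _ _ (hasDensity_union_half (E := E) hAB.symm (by rwa [Set.union_comm])
      (by rwa [Set.union_comm]) h')
    rw [hadd _ _ (Set.disjoint_left.2 fun x hx hxE => hE hxE (Or.inl hx))] at hA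
    rw [hadd _ _ (Set.disjoint_left.2 fun x hx hxE => hE hxE (Or.inr hx))] at hB
    linarith
  have hA : Disjoint (A ∩ B) (A \ B) := Set.disjoint_sdiff_inter.symm
  have hB : Disjoint (A ∩ B) (B \ A) := by
    rw [Set.inter_comm]; exact Set.disjoint_sdiff_inter.symm
  have eA : A ∩ B ∪ A \ B = A := Set.inter_union_sdiff A B
  have eB : A ∩ B ∪ B \ A = B := by rw [Set.inter_comm]; exact Set.inter_union_sdiff B A
  have hdiff : μ (A \ B) = μ (B \ A) := by
    refine key disjoint_sdiff_sdiff (h.congr fun n => ?_)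
    have h1 := count_union hA n
    have h2 := count_union hB n
    rw [eA] at h1
    rw [eB] at h2
    rw [h1, h2, add_sub_add_left_eq_sub]
  have h1 := hadd _ _ hA
  have h2 := hadd _ _ hB
  rw [eA] at h1
  rw [eB] at h2
  rw [h1, h2, hdiff]

/-- As many points cross `n` downwards under a permutation as cross it upwards. -/
theorem ncard_crossing_comm (π : Equiv.Perm ℕ) (n : ℕ) :
    {k : ℕ | n < k ∧ π k ≤ n}.ncard = {k : ℕ | k ≤ n ∧ n < π k}.ncard := by
  have hfin : (π ⁻¹' Set.Iic n).Finite := (Set.finite_Iic n).preimage π.injective.injOn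
  have hcard : (π ⁻¹' Set.Iic n).ncard = (Set.Iic n).ncard :=
    Set.ncard_preimage_of_injective_subset_range π.injective (by simp [π.surjective.range_eq])
  have e1 : {k : ℕ | n < k ∧ π k ≤ n} = π ⁻¹' Set.Iic n \ Set.Iic n := by
    ext k; simp [and_comm]
  have e2 : {k : ℕ | k ≤ n ∧ n < π k} = Set.Iic n \ π ⁻¹' Set.Iic n := by
    ext k; simp
  rw [e1, e2]
  have h1 := Set.ncard_inter_add_ncard_sdiff_eq_ncard (π ⁻¹' Set.Iic n) (Set.Iic n) hfin
  have h2 := Set.ncard_inter_add_ncard_sdiff_eq_ncard (Set.Iic n) (π ⁻¹' Set.Iic n)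
    (Set.finite_Iic n)
  rw [Set.inter_comm] at h1
  omega

theorem abs_count_image_sub_count_le (π : Equiv.Perm ℕ) (A : Set ℕ) (n : ℕ) :
    |count (π '' A) n - count A n| ≤ ({k : ℕ | k ≤ n ∧ n < π k}.ncard : ℝ) + 1 := by
  have himage : (π '' A ∩ Set.Icc 1 n).ncard = (A ∩ π ⁻¹' Set.Icc 1 n).ncard := by
    rw [← Set.image_inter_preimage, Set.ncard_image_of_injective _ π.injective]
  have hfin : (π ⁻¹' Set.Icc 1 n).Finite := (Set.finite_Icc 1 n).preimage π.injective.injOn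
  have hdown : {k : ℕ | n < k ∧ π k ≤ n}.Finite :=
    ((Set.finite_Iic n).preimage π.injective.injOn).subset fun k hk => hk.2
  have hup : {k : ℕ | k ≤ n ∧ n < π k}.Finite := (Set.finite_Iic n).subset fun k hk => hk.1
  have hle : (A ∩ π ⁻¹' Set.Icc 1 n).ncard ≤
      (A ∩ Set.Icc 1 n).ncard + {k : ℕ | k ≤ n ∧ n < π k}.ncard + 1 := by
    have hsub : A ∩ π ⁻¹' Set.Icc 1 n ⊆
        insert 0 (A ∩ Set.Icc 1 n ∪ {k : ℕ | n < k ∧ π k ≤ n}) := by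
      rintro k ⟨hk, -, hkn⟩
      rcases Nat.eq_zero_or_pos k with h0 | h0
      · exact Or.inl h0
      · rcases le_or_gt k n with h | h
        · exact Or.inr (Or.inl ⟨hk, h0, h⟩)
        · exact Or.inr (Or.inr ⟨h, hkn⟩)
    have h1 := Set.ncard_le_ncard hsub
      ((((Set.finite_Icc 1 n).inter_of_right A).union hdown).insert 0)
    have h2 := Set.ncard_insert_le 0 (A ∩ Set.Icc 1 n ∪ {k : ℕ | n < k ∧ π k ≤ n})
    have h3 := Set.ncard_union_le (A ∩ Set.Icc 1 n) {k : ℕ | n < k ∧ π k ≤ n}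
    rw [ncard_crossing_comm] at h3
    omega
  have hge : (A ∩ Set.Icc 1 n).ncard ≤
      (A ∩ π ⁻¹' Set.Icc 1 n).ncard + {k : ℕ | k ≤ n ∧ n < π k}.ncard + 1 := by
    have hsub : A ∩ Set.Icc 1 n ⊆
        insert (π.symm 0) (A ∩ π ⁻¹' Set.Icc 1 n ∪ {k : ℕ | k ≤ n ∧ n < π k}) := by
      rintro k ⟨hk, -, hkn⟩
      rcases Nat.eq_zero_or_pos (π k) with h0 | h0
      · exact Or.inl (π.eq_symm_apply.2 h0)
      · rcases le_or_gt (π k) n with h | h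
        · exact Or.inr (Or.inl ⟨hk, h0, h⟩)
        · exact Or.inr (Or.inr ⟨hkn, h⟩)
    have h1 := Set.ncard_le_ncard hsub (((hfin.inter_of_right A).union hup).insert _)
    have h2 := Set.ncard_insert_le (π.symm 0)
      (A ∩ π ⁻¹' Set.Icc 1 n ∪ {k : ℕ | k ≤ n ∧ n < π k})
    have h3 := Set.ncard_union_le (A ∩ π ⁻¹' Set.Icc 1 n) {k : ℕ | k ≤ n ∧ n < π k}
    omega
  rw [count, count, himage, abs_sub_le_iff, sub_le_iff_le_add', sub_le_iff_le_add', ← add_assoc,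
    ← add_assoc]
  exact ⟨by exact_mod_cast hle, by exact_mod_cast hge⟩

/-- If `π` belongs to the Lévy group and `μ` is a density measure, then
`μ(πA) = μ(A)` for every `A ⊆ ℕ`. -/
theorem densityMeasure_levyGroup_invariant
    (π : Equiv.Perm ℕ) (hπ : InLevyGroup π)
    (μ : Set ℕ → ℝ) (hμ : IsDensityMeasure μ) (A : Set ℕ) :
    μ (π '' A) = μ A := by
  refine hμ.eq_of_tendsto (squeeze_zero_norm (fun n => ?_)
    (by simpa using Tendsto.add hπ tendsto_one_div_atTop_nhds_zero_nat))
  rw [norm_div, Real.norm_eq_abs, Real.norm_natCast, ← one_div, ← add_div]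
  gcongr
  exact abs_count_image_sub_count_le π A n
end

section
/- Permutations in the Lévy group preserve asymptotic density: if π ∈ 𝒢 and A ⊆ ℕ has asymptotic density d(A), then πA has asymptotic density and d(πA) = d(A). -/
open Filter Topology

open Classical in
/-- Counting elements of `A` in `[0, n]` instead of `[1, n]` changes the count by at most one. -/
theorem count_le_card_filter_range (A : Set ℕ) (n : ℕ) :
    count A n ≤ ((Finset.range (n + 1)).filter (· ∈ A)).card ∧
      (((Finset.range (n + 1)).filter (· ∈ A)).card : ℝ) ≤ count A n + 1 := by
  have hcount : A ∩ Set.Icc 1 n = ((Finset.Icc 1 n).filter (· ∈ A) : Finset ℕ) := by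
    ext k
    simp only [Set.mem_inter_iff, Set.mem_Icc, Finset.coe_filter, Finset.mem_Icc,
      Set.mem_ofPred_eq]
    tauto
  rw [count, hcount, Set.ncard_coe_finset]
  constructor
  · gcongr
    intro k hk
    simp only [Finset.mem_Icc, Finset.mem_range] at hk ⊢
    omega
  · have hsub : (Finset.range (n + 1)).filter (· ∈ A) ⊆
        insert 0 ((Finset.Icc 1 n).filter (· ∈ A)) := by
      intro k hk
      simp only [Finset.mem_insert, Finset.mem_filter, Finset.mem_range, Finset.mem_Icc] at hk ⊢
      by_cases h0 : k = 0
      · exact Or.inl h0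
      · exact Or.inr ⟨by omega, hk.2⟩
    exact_mod_cast (Finset.card_le_card hsub).trans (Finset.card_insert_le _ _)

open Classical in
/-- Two finite sets contain the same number of elements of `A`, up to their difference. -/
theorem card_filter_mem_le_add_card_sdiff {α : Type*} [DecidableEq α] (S T : Finset α) (A : Set α) :
    (S.filter (· ∈ A)).card ≤ (T.filter (· ∈ A)).card + (S \ T).card := by
  refine (Finset.card_le_card (fun k hk => ?_)).trans (Finset.card_union_le _ _)
  simp only [Finset.mem_union, Finset.mem_filter, Finset.mem_sdiff] at hk ⊢
  tauto

/-- Permutations in the Lévy group preserve asymptotic density. -/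
theorem levyGroup_preserves_density (π : Equiv.Perm ℕ) (hπ : InLevyGroup π)
    (A : Set ℕ) (a : ℝ) (hA : HasDensity A a) :
    HasDensity (π '' A) a := by
  have hbound := Tendsto.add hπ (tendsto_one_div_atTop_nhds_zero_nat (𝕜 := ℝ))
  rw [add_zero] at hbound
  have hdiff : Tendsto (fun n : ℕ => count (π '' A) n / n - count A n / n) atTop (𝓝 0) := by
    refine squeeze_zero_norm (fun n => ?_) hbound
    rw [← sub_div, ← add_div, Real.norm_eq_abs, abs_div, Nat.abs_cast]
    gcongr
    exact abs_count_image_sub_count_le π A n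
  simpa [HasDensity] using hdiff.add hA
end
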